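/- There exists a constant C > 0, depending only on Ω, μ, δ₀, κ⁺ and κ⁻ (in particular independent of δ ∈ (0, δ₀)), with the following property: if u : cl(Ω) → ℝ is Lipschitz on Ω, continuous on cl(Ω) with u = φ on ∂Ω, and satisfies div(a∇u) = 0 weakly, i.e. ∫_Ω a(x) ⟨∇u(x), ∇ψ(x)⟩ dx = 0 for every smooth function ψ : ℝ² → ℝ with compact support contained in Ω (where ∇u denotes the almost-everywhere defined gradient of the Lipschitz function u), then ess sup_{x ∈ Ω^μ} |∇u(x)| ≤ C ‖φ‖_{L∞(∂Ω)}. -/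

import Mathlib

open Set MeasureTheory

/-- Partial derivative in direction `i` of a function on `ℝ²`. -/
noncomputable def pd (i : Fin 2) (f : EuclideanSpace ℝ (Fin 2) → ℝ)
    (x : EuclideanSpace ℝ (Fin 2)) : ℝ :=
  fderiv ℝ f x (EuclideanSpace.single i 1)

/-- The center `(0, -2-2δ)` of the lower disk `B⁻`. -/
noncomputable def ctr (δ : ℝ) : EuclideanSpace ℝ (Fin 2) :=
  (WithLp.equiv 2 (Fin 2 → ℝ)).symm ![0, -2 - 2 * δ]

/-- The upper unit disk `B⁺`, centered at the origin. -/
noncomputable def Bp : Set (EuclideanSpace ℝ (Fin 2)) := Metric.ball 0 1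

/-- The lower unit disk `B⁻`, centered at `(0, -2-2δ)`. -/
noncomputable def Bm (δ : ℝ) : Set (EuclideanSpace ℝ (Fin 2)) := Metric.ball (ctr δ) 1

open Classical in
/-- The conductivity: `κ⁺` on `B⁺`, `κ⁻` on `B⁻`, and `1` elsewhere. -/
noncomputable def aFun (δ κp κm : ℝ) (x : EuclideanSpace ℝ (Fin 2)) : ℝ :=
  if x ∈ Bp then κp else if x ∈ Bm δ then κm else 1

/-- `Ω^σ = {x ∈ Ω : dist(x, ∂Ω) ≥ σ}`. -/
noncomputable def innerReg (Ω : Set (EuclideanSpace ℝ (Fin 2))) (σ : ℝ) :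
    Set (EuclideanSpace ℝ (Fin 2)) :=
  {x ∈ Ω | σ ≤ Metric.infDist x (frontier Ω)}

/-- `Ω` has smooth boundary: it is the sublevel set of a smooth function with
nonvanishing gradient on the boundary. -/
def SmoothBoundary (Ω : Set (EuclideanSpace ℝ (Fin 2))) : Prop :=
  ∃ f : EuclideanSpace ℝ (Fin 2) → ℝ, ContDiff ℝ (⊤ : ℕ∞) f ∧ Ω = {x | f x < 0} ∧
    ∀ x ∈ frontier Ω, fderiv ℝ f x ≠ 0

/-- `‖φ‖_{L^∞(∂Ω)}`. -/
noncomputable def bdryNorm (Ω : Set (EuclideanSpace ℝ (Fin 2))) (φ : EuclideanSpace ℝ (Fin 2) → ℝ) : ℝ :=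
  sSup ((fun y => |φ y|) '' frontier Ω)

/-!
Let `diskFold c R` be the identity on the disk of centre `c` and radius `R` and the inversion in
its boundary circle outside: a `1`-Lipschitz retraction onto the closed disk. If `u` is harmonic in
the disk `B`, conformal invariance of the Dirichlet integral in dimension two gives
`∫ ⟪∇ (u ∘ diskFold c R), ∇ ψ⟫ = 2 ∫_B ⟪∇ u, ∇ ψ⟫` for every test function `ψ`. Hence, if `u` solves
the conductivity equation with conductivity `κ i` in the `i`-th disk and `s i = (κ i - 1) / 2`,
the function `h = u + ∑ s i * (u ∘ fold i)` is weakly harmonic across all the circles.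

The maximum principle bounds `u`, hence `h`, by the boundary values, and the mean value property
then gives an interior Lipschitz bound `H` for `h`. Let `L i` be the best Lipschitz constant of `u`
on the `i`-th disk, where `(1 + s i) * u = h - ∑_{j ≠ i} s j * (u ∘ fold j)`. As the folds do not
increase distances, `(1 + s i) * L i ≤ H + ∑_{j ≠ i} |s j| * L j`. When
`∑ |s i| / (1 + s i + |s i|) < 1`, as is always the case for two disks, these inequalities bound
the `L i` by a multiple of `H` that does not involve the distances between the disks.
-/

open Filter Topology Metric EuclideanGeometry
open scoped NNReal Gradient RealInnerProductSpace Convolution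

section Gluing

theorem nonempty_inter_frontier_of_isPreconnected {X : Type*} [TopologicalSpace X] {s A : Set X}
    (hs : IsPreconnected s) (hA : (s ∩ A).Nonempty) (hA' : (s ∩ Aᶜ).Nonempty) :
    (s ∩ frontier A).Nonempty := by
  by_contra h
  have hno : ∀ x ∈ s, x ∉ frontier A := fun x hx hf => h ⟨x, hx, hf⟩
  have hcov : s ⊆ interior A ∪ (closure A)ᶜ := fun x hx =>
    or_iff_not_imp_left.2 fun hi hc => hno x hx ⟨hc, hi⟩
  obtain ⟨x, hxs, hxA⟩ := hA
  obtain ⟨y, hys, hyA⟩ := hA'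
  obtain ⟨z, -, hz, hz'⟩ := hs (interior A) (closure A)ᶜ isOpen_interior
    isClosed_closure.isOpen_compl hcov
    ⟨x, hxs, (hcov hxs).resolve_right fun h => h (subset_closure hxA)⟩
    ⟨y, hys, (hcov hys).resolve_left fun h => hyA (interior_subset h)⟩
  exact hz' (subset_closure (interior_subset hz))

theorem tsupport_indicator_subset {X Y : Type*} [TopologicalSpace X] [Zero Y] {A : Set X}
    {f : X → Y} : tsupport (A.indicator f) ⊆ closure A :=
  closure_mono support_indicator_subset

variable {E F : Type*} [SeminormedAddCommGroup E] [NormedSpace ℝ E] [SeminormedAddCommGroup F]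

theorem lipschitzWith_of_lipschitzOnWith_closure {A : Set E} {f : E → F} {K : ℝ≥0}
    (hA : LipschitzOnWith K f (closure A)) (hA' : LipschitzOnWith K f (closure Aᶜ)) :
    LipschitzWith K f := by
  have hcross : ∀ x ∈ A, ∀ y ∉ A, dist (f x) (f y) ≤ K * dist x y := by
    intro x hx y hy
    obtain ⟨z, hz, hzA⟩ := nonempty_inter_frontier_of_isPreconnected
      (convex_segment x y).isPreconnected ⟨x, left_mem_segment ℝ x y, hx⟩
      ⟨y, right_mem_segment ℝ x y, hy⟩
    have hzA' : z ∈ closure Aᶜ := by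
      rw [frontier_eq_closure_inter_closure] at hzA
      exact hzA.2
    calc dist (f x) (f y) ≤ dist (f x) (f z) + dist (f z) (f y) := dist_triangle _ _ _
      _ ≤ K * dist x z + K * dist z y := by
        gcongr
        · exact hA.dist_le_mul x (subset_closure hx) z (frontier_subset_closure hzA)
        · exact hA'.dist_le_mul z hzA' y (subset_closure hy)
      _ = K * dist x y := by rw [← mul_add, dist_add_dist_of_mem_segment hz]
  refine LipschitzWith.of_dist_le_mul fun x y => ?_
  by_cases hx : x ∈ A <;> by_cases hy : y ∈ A
  · exact hA.dist_le_mul x (subset_closure hx) y (subset_closure hy)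
  · exact hcross x hx y hy
  · rw [dist_comm, dist_comm x]
    exact hcross y hy x hx
  · exact hA'.dist_le_mul x (subset_closure hx) y (subset_closure hy)

theorem lipschitzWith_indicator {A : Set E} {f : E → F} {K : ℝ≥0}
    (hf : LipschitzOnWith K f (closure A)) (h0 : ∀ x ∈ frontier A, f x = 0) :
    LipschitzWith K (A.indicator f) := by
  have heq : EqOn (A.indicator f) f (closure A) := fun x hx => by
    by_cases hxA : x ∈ A
    · exact indicator_of_mem hxA f
    · rw [indicator_of_notMem hxA, h0 x ⟨hx, fun h => hxA (interior_subset h)⟩]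
  have heq' : EqOn (A.indicator f) 0 (closure Aᶜ) := fun x hx => by
    by_cases hxA : x ∈ A
    · rw [indicator_of_mem hxA, h0 x (frontier_compl A ▸ ⟨hx, fun h => interior_subset h hxA⟩),
        Pi.zero_apply]
    · exact indicator_of_notMem hxA f
  refine lipschitzWith_of_lipschitzOnWith_closure (A := A) (fun x hx y hy => ?_) fun x hx y hy => ?_
  · rw [heq hx, heq hy]
    exact hf hx hy
  · rw [heq' hx, heq' hy, Pi.zero_apply, Pi.zero_apply, edist_self]
    exact zero_le

end Gluing

section Gradient

variable {E : Type*} [NormedAddCommGroup E] [InnerProductSpace ℝ E]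

section Complete

variable [CompleteSpace E] {f g : E → ℝ} {x : E}

theorem norm_gradient : ‖∇ f x‖ = ‖fderiv ℝ f x‖ :=
  LinearIsometryEquiv.norm_map _ _

theorem norm_gradient_le_of_lipschitzWith {K : ℝ≥0} (hf : LipschitzWith K f) : ‖∇ f x‖ ≤ K :=
  norm_gradient.trans_le (norm_fderiv_le_of_lipschitz ℝ hf)

theorem gradient_eq_zero_of_notMem_tsupport (hx : x ∉ tsupport f) : ∇ f x = 0 := by
  rw [(notMem_tsupport_iff_eventuallyEq.1 hx).gradient_eq]
  exact gradient_fun_const x 0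

theorem gradient_neg : ∇ (-f) x = -∇ f x := by
  rw [gradient, fderiv_neg, map_neg, gradient]

theorem gradient_sub_const (c : ℝ) : ∇ (fun y => f y - c) x = ∇ f x := by
  rw [gradient, fderiv_sub_const, gradient]

theorem gradient_sub (hf : DifferentiableAt ℝ f x) (hg : DifferentiableAt ℝ g x) :
    ∇ (f - g) x = ∇ f x - ∇ g x := by
  rw [gradient, fderiv_sub hf hg, map_sub, gradient, gradient]

theorem measurable_gradient [MeasurableSpace E] [BorelSpace E] (f : E → ℝ) :
    Measurable (∇ f) :=
  (InnerProductSpace.toDual ℝ E).symm.continuous.measurable.comp (measurable_fderiv ℝ f)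

theorem measurable_inner_gradient [MeasurableSpace E] [BorelSpace E] [SecondCountableTopology E]
    (f g : E → ℝ) : Measurable fun x => ⟪∇ f x, ∇ g x⟫ :=
  (measurable_gradient f).inner (measurable_gradient g)

end Complete

variable [FiniteDimensional ℝ E] [MeasurableSpace E] [BorelSpace E] {u θ : E → ℝ} {K C : ℝ≥0}

theorem integrable_mul_inner_gradient {a : E → ℝ} (ha : LocallyIntegrable a)
    (hu : LipschitzWith K u) (hθ : LipschitzWith C θ) (hc : HasCompactSupport θ) :
    Integrable fun x => a x * ⟪∇ u x, ∇ θ x⟫ := by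
  have hon : IntegrableOn (fun x => a x * ⟪∇ u x, ∇ θ x⟫) (tsupport θ) := by
    refine (ha.integrableOn_isCompact hc).mul_bdd (c := K * C)
      (measurable_inner_gradient u θ).aestronglyMeasurable (ae_of_all _ fun x => ?_)
    refine (norm_inner_le_norm _ _).trans ?_
    gcongr
    exacts [norm_gradient_le_of_lipschitzWith hu, norm_gradient_le_of_lipschitzWith hθ]
  refine (integrableOn_iff_integrable_of_support_subset fun x hx => ?_).1 hon
  by_contra h
  exact hx (by simp only [gradient_eq_zero_of_notMem_tsupport h, inner_zero_right, mul_zero])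

theorem integrable_inner_gradient (hu : LipschitzWith K u) (hθ : LipschitzWith C θ)
    (hc : HasCompactSupport θ) : Integrable fun x => ⟪∇ u x, ∇ θ x⟫ := by
  simpa only [one_mul] using integrable_mul_inner_gradient (locallyIntegrable_const 1) hu hθ hc

end Gradient

section Mollification

variable {E : Type*} [NormedAddCommGroup E] [NormedSpace ℝ E] [FiniteDimensional ℝ E]
  [MeasurableSpace E] [BorelSpace E] {μ : Measure E} [μ.IsAddHaarMeasure]
  {η θ : E → ℝ} {C : ℝ≥0}

open ContinuousLinearMap (lsmul)

theorem fderiv_convolution_of_lipschitzWith (hη : Continuous η) (hηc : HasCompactSupport η)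
    (hθ : LipschitzWith C θ) (x : E) :
    fderiv ℝ (η ⋆[lsmul ℝ ℝ, μ] θ) x = (η ⋆[lsmul ℝ ℝ, μ] fderiv ℝ θ) x := by
  have hprod (y : E) : Continuous fun t => η t * θ (y - t) :=
    hη.mul (hθ.continuous.comp (continuous_const.sub continuous_id))
  refine (hasFDerivAt_integral_of_dominated_loc_of_lip (s := univ) (bound := fun t => C * ‖η t‖)
    univ_mem (Eventually.of_forall fun y => (hprod y).aestronglyMeasurable)
    ((hprod x).integrable_of_hasCompactSupport hηc.mul_right)
    (hη.aestronglyMeasurable.smul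
      ((measurable_fderiv ℝ θ).comp (measurable_const.sub measurable_id)).aestronglyMeasurable)
    (ae_of_all _ fun t => LipschitzOnWith.of_dist_le_mul fun y _ z _ => ?_)
    ((hη.integrable_of_hasCompactSupport hηc).norm.const_mul _) ?_).2.fderiv
  · calc dist (η t * θ (y - t)) (η t * θ (z - t)) = ‖η t‖ * dist (θ (y - t)) (θ (z - t)) := by
          rw [dist_eq_norm, dist_eq_norm, ← mul_sub, norm_mul]
      _ ≤ ‖η t‖ * (C * dist (y - t) (z - t)) := by gcongr; exact hθ.dist_le_mul _ _
      _ = Real.nnabs (C * ‖η t‖) * dist y z := by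
          rw [dist_sub_right, Real.coe_nnabs, abs_of_nonneg (by positivity)]
          ring
  · filter_upwards [(Measure.measurePreserving_sub_left μ x).quasiMeasurePreserving.ae
      hθ.ae_differentiableAt] with t ht
    exact ((hasFDerivAt_comp_sub t).2 ht.hasFDerivAt).const_mul (η t)

variable [HasContDiffBump E]

theorem tsupport_normed_convolution_subset (φ : ContDiffBump (0 : E)) (θ : E → ℝ) :
    tsupport (φ.normed μ ⋆[lsmul ℝ ℝ, μ] θ) ⊆ cthickening φ.rOut (tsupport θ) := by
  refine closure_minimal ((support_convolution_subset _).trans ?_) isClosed_cthickening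
  rintro _ ⟨p, hp, q, hq, rfl⟩
  rw [φ.support_normed_eq, mem_ball_zero_iff] at hp
  refine mem_cthickening_of_dist_le _ q _ _ (subset_tsupport _ hq) ?_
  exact (dist_add_self_left q p).trans_le hp.le

theorem norm_fderiv_normed_convolution_le (φ : ContDiffBump (0 : E)) (hθ : LipschitzWith C θ)
    (x : E) : ‖fderiv ℝ (φ.normed μ ⋆[lsmul ℝ ℝ, μ] θ) x‖ ≤ C := by
  rw [fderiv_convolution_of_lipschitzWith φ.continuous_normed φ.hasCompactSupport_normed hθ,
    ← dist_zero_right]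
  refine dist_convolution_le C.2 φ.support_normed_eq.subset φ.nonneg_normed φ.integral_normed
    (measurable_fderiv ℝ θ).aestronglyMeasurable fun y _ => ?_
  rw [dist_zero_right]
  exact norm_fderiv_le_of_lipschitz ℝ hθ

theorem exists_contDiffBump_seq (E : Type*) [NormedAddCommGroup E] [NormedSpace ℝ E] {d : ℝ}
    (hd : 0 < d) : ∃ φ : ℕ → ContDiffBump (0 : E), (∀ n, (φ n).rOut ≤ d) ∧
      (∀ n, (φ n).rOut ≤ 2 * (φ n).rIn) ∧ Tendsto (fun n => (φ n).rOut) atTop (𝓝 0) := by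
  refine ⟨fun n => ⟨d / (n + 1) / 2, d / (n + 1), by positivity, half_lt_self (by positivity)⟩,
    fun n => div_le_self hd.le (by simp), fun n => (mul_div_cancel₀ _ two_ne_zero).ge, ?_⟩
  simpa [div_eq_mul_inv] using
    (tendsto_one_div_add_atTop_nhds_zero_nat (𝕜 := ℝ)).const_mul d

theorem exists_contDiff_seq_tendsto_fderiv {Ω : Set E} (hΩ : IsOpen Ω) (hθ : LipschitzWith C θ)
    (hc : HasCompactSupport θ) (hs : tsupport θ ⊆ Ω) :
    ∃ (S : Set E) (Θ : ℕ → E → ℝ), IsCompact S ∧ S ⊆ Ω ∧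
      (∀ n, ContDiff ℝ (⊤ : ℕ∞) (Θ n) ∧ tsupport (Θ n) ⊆ S ∧ ∀ x, ‖fderiv ℝ (Θ n) x‖ ≤ C) ∧
      ∀ᵐ x ∂μ, Tendsto (fun n => fderiv ℝ (Θ n) x) atTop (𝓝 (fderiv ℝ θ x)) := by
  obtain ⟨d, hd, hdΩ⟩ := IsCompact.exists_cthickening_subset_open hc hΩ hs
  obtain ⟨φ, hφd, hφ2, hφ0⟩ := exists_contDiffBump_seq E hd
  refine ⟨cthickening d (tsupport θ), fun n => (φ n).normed μ ⋆[lsmul ℝ ℝ, μ] θ, hc.cthickening,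
    hdΩ, fun n => ⟨?_, ?_, norm_fderiv_normed_convolution_le (φ n) hθ⟩, ?_⟩
  · exact (φ n).hasCompactSupport_normed.contDiff_convolution_left _ (φ n).contDiff_normed
      hθ.continuous.locallyIntegrable
  · exact (tsupport_normed_convolution_subset (φ n) θ).trans (cthickening_mono (hφd n) _)
  · have hloc : LocallyIntegrable (fderiv ℝ θ) μ :=
      (locallyIntegrable_const (C : ℝ)).mono (measurable_fderiv ℝ θ).aestronglyMeasurable
        (ae_of_all _ fun x => (norm_fderiv_le_of_lipschitz ℝ hθ).trans (le_abs_self _))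
    filter_upwards [ContDiffBump.ae_convolution_tendsto_right_of_locallyIntegrable hφ0
      (Eventually.of_forall hφ2) hloc] with x hx
    exact hx.congr fun n => (fderiv_convolution_of_lipschitzWith (φ n).continuous_normed
      (φ n).hasCompactSupport_normed hθ x).symm

end Mollification

section Truncation

theorem lipschitzWith_indicator_max_sub {E : Type*} [SeminormedAddCommGroup E] [NormedSpace ℝ E]
    {u : E → ℝ} {Ω : Set E} {K : ℝ≥0} {c : ℝ} (hu : LipschitzWith K u)
    (hc : ∀ x ∈ frontier Ω, u x ≤ c) :
    LipschitzWith K (Ω.indicator fun x => max (u x - c) 0) := by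
  have hmax : LipschitzWith K fun x => max (u x - c) 0 :=
    (LipschitzWith.of_dist_le_mul fun x y => by
      rw [dist_sub_right]; exact hu.dist_le_mul x y : LipschitzWith K fun x => u x - c).max_const 0
  exact lipschitzWith_indicator hmax.lipschitzOnWith fun x hx =>
    max_eq_right (sub_nonpos.2 (hc x hx))

theorem tsupport_indicator_max_sub_subset {X : Type*} [TopologicalSpace X] {u : X → ℝ} {Ω : Set X}
    {c : ℝ} (hΩ : IsOpen Ω) (hu : Continuous u)
    (hc : ∀ x ∈ frontier Ω, u x < c) :
    tsupport (Ω.indicator fun x => max (u x - c) 0) ⊆ Ω := by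
  have hsub : tsupport (Ω.indicator fun x => max (u x - c) 0) ⊆ closure Ω ∩ {x | c ≤ u x} := by
    refine closure_minimal (fun x hx => ?_)
      (isClosed_closure.inter (isClosed_le continuous_const hu))
    rw [Function.mem_support, indicator_apply_ne_zero] at hx
    have hcx : c ≤ u x := le_of_not_gt fun h => hx.2 (max_eq_right (sub_nonpos.2 h.le))
    exact ⟨subset_closure hx.1, hcx⟩
  intro x hx
  by_contra hxΩ
  exact (hc x ⟨(hsub hx).1, by rwa [hΩ.interior_eq]⟩).not_ge (hsub hx).2

theorem inner_gradient_indicator_max_sub {E : Type*} [NormedAddCommGroup E] [InnerProductSpace ℝ E]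
    [CompleteSpace E] {u : E → ℝ} {Ω : Set E} {c : ℝ} (hΩ : IsOpen Ω) (hu : Continuous u) (x : E) :
    ⟪∇ u x, ∇ (Ω.indicator fun x => max (u x - c) 0) x⟫ =
      ‖∇ (Ω.indicator fun x => max (u x - c) 0) x‖ ^ 2 := by
  set θ := Ω.indicator fun x => max (u x - c) 0 with hθ
  by_cases hx : x ∈ Ω ∧ c < u x
  · have hev : θ =ᶠ[𝓝 x] fun y => u y - c := by
      filter_upwards [hΩ.mem_nhds hx.1, (isOpen_lt continuous_const hu).mem_nhds hx.2] with y hy hcy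
      rw [hθ, indicator_of_mem hy, max_eq_left (sub_nonneg.2 (le_of_lt hcy))]
    rw [hev.gradient_eq, gradient_sub_const, real_inner_self_eq_norm_sq]
  · have hθ0 (y : E) : 0 ≤ θ y := indicator_nonneg (fun _ _ => le_max_right _ _) y
    have hθx : θ x = 0 := indicator_apply_eq_zero.2 fun hxΩ =>
      max_eq_right (sub_nonpos.2 (not_lt.1 fun h => hx ⟨hxΩ, h⟩))
    have hmin : IsLocalMin θ x := Eventually.of_forall fun y => hθx.trans_le (hθ0 y)
    have hgrad : ∇ θ x = 0 := by rw [gradient, hmin.fderiv_eq_zero, map_zero]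
    rw [hgrad, inner_zero_right, norm_zero, zero_pow two_ne_zero]

end Truncation

section WeakSolution

variable {E : Type*} [NormedAddCommGroup E] [InnerProductSpace ℝ E] [FiniteDimensional ℝ E]
  [MeasurableSpace E] [BorelSpace E]

/-- `u` is a weak solution of `div (a ∇u) = 0` in `Ω`, tested against the Lipschitz functions with
compact support in `Ω`; for `a = 1` this says that `u` is weakly harmonic. The set `Ω` need not be
open: on a closed ball the test functions are those vanishing outside that ball. -/
def IsWeakSolution (a u : E → ℝ) (Ω : Set E) : Prop :=
  ∀ ⦃θ : E → ℝ⦄ ⦃C : ℝ≥0⦄, LipschitzWith C θ → HasCompactSupport θ → tsupport θ ⊆ Ω →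
    ∫ x, a x * ⟪∇ u x, ∇ θ x⟫ = 0

namespace IsWeakSolution

variable {a u : E → ℝ} {Ω : Set E} {K : ℝ≥0}

theorem of_contDiff (hΩ : IsOpen Ω) (ha : LocallyIntegrable a) (hu : LipschitzWith K u)
    (hw : ∀ ψ : E → ℝ, ContDiff ℝ (⊤ : ℕ∞) ψ → HasCompactSupport ψ → tsupport ψ ⊆ Ω →
      ∫ x, a x * ⟪∇ u x, ∇ ψ x⟫ = 0) : IsWeakSolution a u Ω := by
  intro θ C hθ hc hs
  obtain ⟨S, Θ, hS, hSΩ, hΘ, hlim⟩ := exists_contDiff_seq_tendsto_fderiv (μ := volume) hΩ hθ hc hs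
  have hzero (n : ℕ) : ∫ x, a x * ⟪∇ u x, ∇ (Θ n) x⟫ = 0 :=
    hw _ (hΘ n).1 (hS.of_isClosed_subset (isClosed_tsupport _) (hΘ n).2.1) ((hΘ n).2.1.trans hSΩ)
  have htend : Tendsto (fun n => ∫ x, a x * ⟪∇ u x, ∇ (Θ n) x⟫) atTop
      (𝓝 (∫ x, a x * ⟪∇ u x, ∇ θ x⟫)) := by
    refine tendsto_integral_of_dominated_convergence
      (S.indicator fun x => ‖a x‖ * (K * C))
      (fun n => ha.aestronglyMeasurable.mul (measurable_inner_gradient u _).aestronglyMeasurable)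
      ((integrable_indicator_iff hS.measurableSet).2
        ((ha.integrableOn_isCompact hS).norm.mul_const _)) (fun n => ae_of_all _ fun x => ?_) ?_
    · by_cases hx : x ∈ S
      · rw [indicator_of_mem hx, norm_mul]
        gcongr
        refine (norm_inner_le_norm _ _).trans ?_
        gcongr
        exacts [norm_gradient_le_of_lipschitzWith hu, norm_gradient.trans_le ((hΘ n).2.2 x)]
      · rw [indicator_of_notMem hx, gradient_eq_zero_of_notMem_tsupport fun h => hx ((hΘ n).2.1 h),
          inner_zero_right, mul_zero, norm_zero]
    · filter_upwards [hlim] with x hx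
      have hgrad : Tendsto (fun n => ∇ (Θ n) x) atTop (𝓝 (∇ θ x)) :=
        ((InnerProductSpace.toDual ℝ E).symm.continuous.tendsto _).comp hx
      exact (tendsto_const_nhds.inner hgrad).const_mul (a x)
  simp only [hzero] at htend
  exact tendsto_nhds_unique htend tendsto_const_nhds

theorem of_ae_eq_const (hw : IsWeakSolution a u Ω) {A : Set E} (hA : A ⊆ Ω) {κ : ℝ} (hκ : κ ≠ 0)
    (ha : ∀ᵐ x, x ∈ A → a x = κ) : IsWeakSolution 1 u A := by
  intro θ C hθ hc hs
  have hκa : ∫ x, κ * ⟪∇ u x, ∇ θ x⟫ = ∫ x, a x * ⟪∇ u x, ∇ θ x⟫ := by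
    refine integral_congr_ae ?_
    filter_upwards [ha] with x hx
    by_cases h : x ∈ tsupport θ
    · rw [hx (hs h)]
    · rw [gradient_eq_zero_of_notMem_tsupport h, inner_zero_right, mul_zero, mul_zero]
  rw [hw hθ hc (hs.trans hA), integral_const_mul] at hκa
  simpa only [Pi.one_apply, one_mul] using (mul_eq_zero.1 hκa).resolve_left hκ

theorem neg (hw : IsWeakSolution a u Ω) : IsWeakSolution a (-u) Ω := by
  intro θ C hθ hc hs
  simp only [gradient_neg, inner_neg_left, mul_neg, integral_neg, hw hθ hc hs, neg_zero]

end IsWeakSolution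

section MaximumPrinciple

theorem eq_zero_of_gradient_ae_eq_zero [Nontrivial E] {θ : E → ℝ} {C : ℝ≥0}
    (hθ : LipschitzWith C θ) (hc : HasCompactSupport θ) (h0 : 0 ≤ θ) (hD : ∀ᵐ x, ∇ θ x = 0) :
    θ = 0 := by
  obtain ⟨v, hv⟩ := exists_ne (0 : E)
  -- Integrate by parts against the linear function `⟪v, ·⟫`, whose derivative along `v` is `‖v‖²`.
  have hparts :=
    LipschitzWith.integral_lineDeriv_mul_eq (μ := volume) (innerSL ℝ v).lipschitz hθ hc v
  have hleft (x : E) : lineDeriv ℝ (innerSL ℝ v) x v = ‖v‖ ^ 2 := by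
    rw [(innerSL ℝ v).differentiableAt.lineDeriv_eq_fderiv, ContinuousLinearMap.fderiv,
      innerSL_apply_apply, real_inner_self_eq_norm_sq]
  have hright : ∫ x, lineDeriv ℝ θ x (-v) * innerSL ℝ v x = 0 := by
    refine integral_eq_zero_of_ae ?_
    filter_upwards [hD, hθ.ae_differentiableAt] with x hx hdx
    rw [hdx.lineDeriv_eq_fderiv, ← inner_gradient_left, hx, inner_zero_left, zero_mul,
      Pi.zero_apply]
  simp only [hleft] at hparts
  rw [hright, integral_const_mul] at hparts
  have hint : ∫ x, θ x = 0 := (mul_eq_zero.1 hparts).resolve_left (by positivity)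
  exact (hθ.continuous.ae_eq_iff_eq volume continuous_const).1
    ((integral_eq_zero_iff_of_nonneg h0 (hθ.continuous.integrable_of_hasCompactSupport hc)).1 hint)

namespace IsWeakSolution

variable [Nontrivial E] {a u : E → ℝ} {Ω : Set E} {K : ℝ≥0} {M : ℝ}

theorem le_of_frontier_le (hw : IsWeakSolution a u Ω) (hΩ : IsOpen Ω)
    (hb : Bornology.IsBounded Ω) (ha : LocallyIntegrable a) (hpos : ∀ x, 0 < a x)
    (hu : LipschitzWith K u) (hM : ∀ x ∈ frontier Ω, u x ≤ M) : ∀ x ∈ Ω, u x ≤ M := by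
  intro x hx
  refine le_of_forall_gt_imp_ge_of_dense fun c hc => ?_
  have hlt : ∀ y ∈ frontier Ω, u y < c := fun y hy => (hM y hy).trans_lt hc
  set θ := Ω.indicator fun y => max (u y - c) 0 with hθdef
  have hθ : LipschitzWith K θ := lipschitzWith_indicator_max_sub hu fun y hy => (hlt y hy).le
  have hsΩ : tsupport θ ⊆ Ω := tsupport_indicator_max_sub_subset hΩ hu.continuous hlt
  have hθc : HasCompactSupport θ :=
    hb.isCompact_closure.of_isClosed_subset (isClosed_tsupport _) (hsΩ.trans subset_closure)
  have henergy : ∫ y, a y * ‖∇ θ y‖ ^ 2 = 0 := by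
    simpa only [θ, inner_gradient_indicator_max_sub hΩ hu.continuous] using hw hθ hθc hsΩ
  have hint : Integrable fun y => a y * ‖∇ θ y‖ ^ 2 := by
    simpa only [real_inner_self_eq_norm_sq] using integrable_mul_inner_gradient ha hθ hθ hθc
  rw [integral_eq_zero_iff_of_nonneg (fun y => by have := hpos y; positivity) hint] at henergy
  have hgrad : ∀ᵐ y, ∇ θ y = 0 := henergy.mono fun y hy => by
    simpa [(hpos y).ne'] using hy
  have hzero : θ x = 0 := congrFun (eq_zero_of_gradient_ae_eq_zero hθ hθc
    (fun y => indicator_nonneg (fun _ _ => le_max_right _ _) y) hgrad) x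
  rw [hθdef, indicator_of_mem hx] at hzero
  exact sub_nonpos.1 ((le_max_left _ _).trans_eq hzero)

theorem abs_le_of_frontier_abs_le (hw : IsWeakSolution a u Ω) (hΩ : IsOpen Ω)
    (hb : Bornology.IsBounded Ω) (ha : LocallyIntegrable a) (hpos : ∀ x, 0 < a x)
    (hu : LipschitzWith K u) (hM : ∀ x ∈ frontier Ω, |u x| ≤ M) : ∀ x ∈ Ω, |u x| ≤ M :=
  fun x hx => abs_le'.2
    ⟨hw.le_of_frontier_le hΩ hb ha hpos hu (fun y hy => (abs_le'.1 (hM y hy)).1) x hx,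
      hw.neg.le_of_frontier_le hΩ hb ha hpos hu.neg (fun y hy => (abs_le'.1 (hM y hy)).2) x hx⟩

end IsWeakSolution

end MaximumPrinciple

end WeakSolution

section MeanValue

theorem lipschitzOnWith_const_sub_dist_sq {X : Type*} [PseudoMetricSpace X] (s : ℝ) (x : X)
    {r : ℝ≥0} : LipschitzOnWith (2 * r) (fun y => s - dist y x ^ 2) (closedBall x r) := by
  refine LipschitzOnWith.of_dist_le_mul fun y hy z hz => ?_
  calc dist (s - dist y x ^ 2) (s - dist z x ^ 2)
      = (dist y x + dist z x) * |dist y x - dist z x| := by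
        rw [dist_sub_left, Real.dist_eq, sq_sub_sq, abs_mul, abs_of_nonneg (by positivity)]
    _ ≤ (r + r) * dist y z := by
        gcongr
        · exact hy
        · exact hz
        · simpa only [Real.dist_eq] using dist_dist_dist_le_left y z x
    _ = ↑(2 * r) * dist y z := by push_cast; ring

variable {E : Type*} [NormedAddCommGroup E] [InnerProductSpace ℝ E]

theorem gradient_const_sub_dist_sq [CompleteSpace E] (s : ℝ) (x y : E) :
    ∇ (fun z => s - dist z x ^ 2) y = (-2 : ℝ) • (y - x) := by
  have hderiv := (((hasFDerivAt_id (𝕜 := ℝ) y).sub_const x).norm_sq.const_sub s).fderiv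
  simp only [id, ← dist_eq_norm] at hderiv
  refine ext_inner_right ℝ fun v => ?_
  rw [inner_gradient_left, hderiv, inner_smul_left]
  simp [inner_sub_left]

variable [FiniteDimensional ℝ E] [MeasurableSpace E] [BorelSpace E]
  {h : E → ℝ} {Ω : Set E} {K : ℝ≥0} {x : E} {r : ℝ}

theorem integrableOn_ball_of_continuous {f : E → ℝ} (hf : Continuous f) :
    IntegrableOn f (ball x r) :=
  (hf.continuousOn.integrableOn_compact (isCompact_closedBall x r)).mono_set ball_subset_closedBall

theorem integral_inner_gradient_indicator_ball (hr : r ≠ 0) (u f : E → ℝ) :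
    ∫ y, ⟪∇ u y, ∇ ((ball x r).indicator f) y⟫ = ∫ y in ball x r, ⟪∇ u y, ∇ f y⟫ := by
  have hsphere : ∀ᵐ y, y ∉ sphere x r :=
    measure_eq_zero_iff_ae_notMem.1 (Measure.addHaar_sphere_of_ne_zero volume x hr)
  rw [← integral_indicator measurableSet_ball]
  refine integral_congr_ae ?_
  filter_upwards [hsphere] with y hy
  by_cases hyb : y ∈ ball x r
  · have hev : (ball x r).indicator f =ᶠ[𝓝 y] f := by
      filter_upwards [isOpen_ball.mem_nhds hyb] with z hz using indicator_of_mem hz f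
    rw [indicator_of_mem hyb, hev.gradient_eq]
  · have hys : y ∉ tsupport ((ball x r).indicator f) := fun h =>
      hyb (lt_of_le_of_ne (closure_ball_subset_closedBall (tsupport_indicator_subset h)) hy)
    rw [indicator_of_notMem hyb, gradient_eq_zero_of_notMem_tsupport hys, inner_zero_right]

theorem IsWeakSolution.setIntegral_ball_inner_gradient_eq_zero {f : E → ℝ} {C : ℝ≥0}
    (hw : IsWeakSolution 1 h Ω) (hr : r ≠ 0) (hx : closedBall x r ⊆ Ω)
    (hf : LipschitzOnWith C f (closedBall x r)) (hf0 : ∀ y ∈ sphere x r, f y = 0) :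
    ∫ y in ball x r, ⟪∇ h y, ∇ f y⟫ = 0 := by
  have hlip : LipschitzWith C ((ball x r).indicator f) :=
    lipschitzWith_indicator (hf.mono closure_ball_subset_closedBall)
      fun y hy => hf0 y (frontier_ball_subset_sphere hy)
  have hs : tsupport ((ball x r).indicator f) ⊆ closedBall x r :=
    tsupport_indicator_subset.trans closure_ball_subset_closedBall
  have hzero := hw hlip ((isCompact_closedBall x r).of_isClosed_subset (isClosed_tsupport _) hs)
    (hs.trans hx)
  simpa only [Pi.one_apply, one_mul, integral_inner_gradient_indicator_ball hr] using hzero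

theorem IsWeakSolution.setIntegral_ball_inner_gradient_sub_eq_zero (hw : IsWeakSolution 1 h Ω)
    (hr : 0 < r) (hx : closedBall x r ⊆ Ω) : ∫ y in ball x r, ⟪∇ h y, y - x⟫ = 0 := by
  lift r to ℝ≥0 using hr.le
  have hzero := hw.setIntegral_ball_inner_gradient_eq_zero hr.ne' hx
    (lipschitzOnWith_const_sub_dist_sq ((r : ℝ) ^ 2) x) fun y hy => by
      rw [mem_sphere.1 hy, sub_self]
  simp only [gradient_const_sub_dist_sq, inner_smul_right, integral_const_mul] at hzero
  exact (mul_eq_zero.1 hzero).resolve_left (by norm_num)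

theorem hasDerivAt_setIntegral_ball_add_smul (hh : LipschitzWith K h) {t : ℝ} (ht : t ≠ 0) :
    HasDerivAt (fun s : ℝ => ∫ z in ball (0 : E) 1, h (x + s • z))
      (∫ z in ball (0 : E) 1, ⟪∇ h (x + t • z), z⟫) t := by
  have hcont := hh.continuous
  refine (hasDerivAt_integral_of_dominated_loc_of_lip (s := univ) (bound := fun z => K * ‖z‖)
    univ_mem (Eventually.of_forall fun s => ?_) ?_ ?_ ?_
    (integrableOn_ball_of_continuous (by fun_prop)) ?_).2
  · exact Continuous.aestronglyMeasurable (by fun_prop)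
  · exact integrableOn_ball_of_continuous (by fun_prop)
  · exact (((measurable_gradient h).comp (by fun_prop)).inner measurable_id).aestronglyMeasurable
  · refine ae_of_all _ fun z => LipschitzOnWith.of_dist_le_mul fun a _ b _ => ?_
    calc dist (h (x + a • z)) (h (x + b • z)) ≤ K * dist (x + a • z) (x + b • z) :=
          hh.dist_le_mul _ _
      _ = Real.nnabs (K * ‖z‖) * dist a b := by
          rw [dist_add_left, dist_eq_norm, ← sub_smul, norm_smul, Real.coe_nnabs, Real.dist_eq,
            Real.norm_eq_abs, abs_of_nonneg (by positivity : (0 : ℝ) ≤ K * ‖z‖)]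
          ring
  · have hdiff : ∀ᵐ z : E, DifferentiableAt ℝ h (x + t • z) :=
      ((measurePreserving_add_left volume x).quasiMeasurePreserving.comp
        (Measure.quasiMeasurePreserving_smul volume ht)).ae hh.ae_differentiableAt
    filter_upwards [ae_restrict_of_ae hdiff] with z hz
    have hline : HasDerivAt (fun s : ℝ => x + s • z) z t := by
      simpa only [id, one_smul] using ((hasDerivAt_id t).smul_const z).const_add x
    rw [inner_gradient_left]
    exact hz.hasFDerivAt.comp_hasDerivAt t hline

theorem measureReal_ball_of_pos (x : E) (hr : 0 < r) :
    volume.real (ball x r) = r ^ Module.finrank ℝ E * volume.real (ball (0 : E) 1) := by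
  rw [measureReal_def, Measure.addHaar_ball_of_pos volume x hr, ENNReal.toReal_mul,
    ENNReal.toReal_ofReal (by positivity), measureReal_def]

theorem measureReal_ball_pos (x : E) (hr : 0 < r) : 0 < volume.real (ball x r) :=
  ENNReal.toReal_pos (measure_ball_pos volume x hr).ne' measure_ball_lt_top.ne

theorem setIntegral_ball_add_smul (x : E) (hr : 0 < r) (G : E → ℝ) :
    ∫ z in ball (0 : E) 1, G (x + r • z) =
      (r ^ Module.finrank ℝ E)⁻¹ * ∫ y in ball x r, G y := by
  have hball : (x + ·) ⁻¹' ball x r = ball (0 : E) r := by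
    rw [preimage_add_ball, sub_self]
  rw [Measure.setIntegral_comp_smul_of_pos volume (fun y => G (x + y)) _ hr,
    smul_unitBall_of_pos hr, ← hball, (measurePreserving_add_left volume x).setIntegral_preimage_emb
      (MeasurableEquiv.addLeft x).measurableEmbedding, smul_eq_mul]

theorem continuous_setIntegral_ball_add_smul (hh : Continuous h) (x : E) :
    Continuous fun t : ℝ => ∫ z in ball (0 : E) 1, h (x + t • z) := by
  have hae : ball (0 : E) 1 =ᵐ[volume] closedBall 0 1 := by
    rw [← ball_union_sphere]
    exact (union_ae_eq_left_of_ae_eq_empty (ae_eq_empty.2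
      (Measure.addHaar_sphere_of_ne_zero volume 0 one_ne_zero))).symm
  simp only [setIntegral_congr_set hae]
  exact continuous_parametric_integral_of_continuous (by fun_prop) (isCompact_closedBall 0 1)

theorem IsWeakSolution.setAverage_ball_eq (hw : IsWeakSolution 1 h Ω) (hh : LipschitzWith K h)
    (hr : 0 < r) (hx : ball x r ⊆ Ω) : ⨍ y in ball x r, h y = h x := by
  set F : ℝ → ℝ := fun t => ∫ z in ball (0 : E) 1, h (x + t • z) with hF
  have hderiv : ∀ t ∈ Ioo 0 r, HasDerivAt F 0 t := by
    intro t ht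
    have hzero := setIntegral_ball_add_smul x ht.1 fun y => ⟪∇ h y, y - x⟫
    rw [hw.setIntegral_ball_inner_gradient_sub_eq_zero ht.1
      ((closedBall_subset_ball ht.2).trans hx), mul_zero] at hzero
    simp only [add_sub_cancel_left, inner_smul_right, integral_const_mul] at hzero
    rw [← (mul_eq_zero.1 hzero).resolve_left ht.1.ne']
    exact hasDerivAt_setIntegral_ball_add_smul hh ht.1.ne'
  obtain ⟨c, -, hc⟩ := exists_hasDerivAt_eq_slope F (fun _ => 0) hr
    (continuous_setIntegral_ball_add_smul hh.continuous x).continuousOn hderiv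
  have hvol0 := (measureReal_ball_pos (0 : E) one_pos).ne'
  have hF0r : F 0 = F r := by
    rw [eq_comm, div_eq_zero_iff, sub_eq_zero] at hc
    exact (hc.resolve_right (by simpa using hr.ne')).symm
  calc ⨍ y in ball x r, h y = (volume.real (ball (0 : E) 1))⁻¹ * F r := by
        simp only [hF]
        rw [setIntegral_ball_add_smul x hr h, setAverage_eq, measureReal_ball_of_pos x hr,
          smul_eq_mul, mul_inv, mul_comm _⁻¹, mul_assoc]
    _ = h x := by
        rw [← hF0r]
        simp only [hF, zero_smul, add_zero, setIntegral_const, smul_eq_mul,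
          inv_mul_cancel_left₀ hvol0]

theorem measureReal_ball_sdiff_ball_le (x y : E) (hr : 0 < r) :
    volume.real (ball x r \ ball y r) ≤
      Module.finrank ℝ E / r * dist x y * volume.real (ball x r) := by
  rcases lt_or_ge (dist x y) r with hxy | hxy
  · have hsub : ball x r \ ball y r ⊆ ball x r \ ball x (r - dist x y) :=
      sdiff_subset_sdiff_right (ball_subset_ball' (by linarith))
    have hbernoulli := one_add_mul_sub_le_pow (a := 1 - dist x y / r)
      (by have := (div_le_one hr).2 hxy.le; linarith) (Module.finrank ℝ E)
    have hscale : volume.real (ball x (r - dist x y)) =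
        (1 - dist x y / r) ^ Module.finrank ℝ E * volume.real (ball x r) := by
      rw [measureReal_ball_of_pos x (sub_pos.2 hxy), measureReal_ball_of_pos x hr, ← mul_assoc,
        ← mul_pow, sub_mul, one_mul, div_mul_cancel₀ _ hr.ne']
    calc volume.real (ball x r \ ball y r)
        ≤ volume.real (ball x r \ ball x (r - dist x y)) :=
          measureReal_mono hsub (measure_lt_top_of_subset sdiff_subset measure_ball_lt_top.ne).ne
      _ = volume.real (ball x r) - volume.real (ball x (r - dist x y)) :=
          measureReal_sdiff (ball_subset_ball (by linarith [dist_nonneg (x := x) (y := y)]))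
            measurableSet_ball
      _ = (1 - (1 - dist x y / r) ^ Module.finrank ℝ E) * volume.real (ball x r) := by
          rw [hscale, sub_mul, one_mul]
      _ ≤ Module.finrank ℝ E / r * dist x y * volume.real (ball x r) := by
          gcongr
          linarith [mul_div_right_comm (Module.finrank ℝ E : ℝ) (dist x y) r,
            mul_div_assoc (Module.finrank ℝ E : ℝ) (dist x y) r]
  · have : Nontrivial E := ⟨x, y, dist_pos.1 (hr.trans_le hxy)⟩
    have hn : (1 : ℝ) ≤ Module.finrank ℝ E := mod_cast Module.finrank_pos (R := ℝ) (M := E)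
    have hone : 1 ≤ Module.finrank ℝ E / r * dist x y := by
      rw [div_mul_eq_mul_div, one_le_div hr]
      nlinarith
    exact (measureReal_mono sdiff_subset measure_ball_lt_top.ne).trans
      (le_mul_of_one_le_left measureReal_nonneg hone)

theorem IsWeakSolution.lipschitzOnWith_of_abs_le {M : ℝ≥0} (hw : IsWeakSolution 1 h Ω)
    (hh : LipschitzWith K h) (hM : ∀ x ∈ Ω, |h x| ≤ M) {r : ℝ≥0} (hr : 0 < r) :
    LipschitzOnWith (2 * Module.finrank ℝ E / r * M) h {x | ball x r ⊆ Ω} := by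
  have hr' : (0 : ℝ) < r := hr
  have hbound (x y : E) (hx : ball x r ⊆ Ω) : |∫ z in ball x r \ ball y r, h z| ≤
      M * (Module.finrank ℝ E / r * dist x y * volume.real (ball x r)) :=
    calc |∫ z in ball x r \ ball y r, h z| ≤ M * volume.real (ball x r \ ball y r) :=
          norm_setIntegral_le_of_norm_le_const (f := h)
            (measure_lt_top_of_subset sdiff_subset measure_ball_lt_top.ne)
            fun z hz => hM z (hx hz.1)
      _ ≤ M * (Module.finrank ℝ E / r * dist x y * volume.real (ball x r)) := by
          gcongr
          exact measureReal_ball_sdiff_ball_le x y hr'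
  have hint (x : E) : IntegrableOn h (ball x r) := integrableOn_ball_of_continuous hh.continuous
  refine LipschitzOnWith.of_dist_le_mul fun x hx y hy => ?_
  have hvol : volume.real (ball y r) = volume.real (ball x r) := by
    rw [measureReal_ball_of_pos y hr', measureReal_ball_of_pos x hr']
  have hmean : (h x - h y) * volume.real (ball x r) =
      (∫ z in ball x r \ ball y r, h z) - ∫ z in ball y r \ ball x r, h z := by
    rw [← hw.setAverage_ball_eq hh hr' hx, ← hw.setAverage_ball_eq hh hr' hy, setAverage_eq,
      setAverage_eq, hvol, smul_eq_mul, smul_eq_mul, ← mul_sub,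
      ← integral_inter_add_sdiff (t := ball y r) measurableSet_ball (hint x),
      ← integral_inter_add_sdiff (t := ball x r) measurableSet_ball (hint y), inter_comm,
      add_sub_add_left_eq_sub, mul_comm _⁻¹,
      inv_mul_cancel_right₀ (measureReal_ball_pos x hr').ne']
  refine le_of_mul_le_mul_right ?_ (measureReal_ball_pos x hr')
  calc dist (h x) (h y) * volume.real (ball x r)
      = |(∫ z in ball x r \ ball y r, h z) - ∫ z in ball y r \ ball x r, h z| := by
        rw [← hmean, abs_mul, abs_of_pos (measureReal_ball_pos x hr'), Real.dist_eq]
    _ ≤ M * (Module.finrank ℝ E / r * dist x y * volume.real (ball x r)) +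
        M * (Module.finrank ℝ E / r * dist y x * volume.real (ball y r)) :=
        (abs_sub _ _).trans (add_le_add (hbound x y hx) (hbound y x hy))
    _ = ↑(2 * Module.finrank ℝ E / r * M) * dist x y * volume.real (ball x r) := by
        rw [hvol, dist_comm y x]
        push_cast
        ring

end MeanValue

section DiskFold

variable {E : Type*} [NormedAddCommGroup E] [InnerProductSpace ℝ E] {c x y : E} {R : ℝ}

theorem dist_inversion_inversion_le {r : ℝ} (hr : 0 < r) (hx : r ≤ dist x c) (hy : r ≤ dist y c) :
    dist (inversion c R x) (inversion c R y) ≤ (R / r) ^ 2 * dist x y := by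
  have hxc : x ≠ c := dist_pos.1 (hr.trans_le hx)
  have hyc : y ≠ c := dist_pos.1 (hr.trans_le hy)
  rw [dist_inversion_inversion hxc hyc, div_pow, sq r]
  gcongr

theorem inversion_image_ball_sdiff_center (c : E) (hR : 0 < R) :
    inversion c R '' (ball c R \ {c}) = (closedBall c R)ᶜ := by
  have hinv := inversion_involutive c hR.ne'
  ext x
  rw [image_eq_preimage_of_inverse hinv.leftInverse hinv.rightInverse, mem_preimage, Set.mem_sdiff,
    mem_singleton_iff, inversion_eq_center hR.ne', mem_ball, dist_inversion_center, mem_compl_iff,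
    mem_closedBall, not_le]
  rcases eq_or_ne x c with rfl | hx
  · simp [hR.le]
  · rw [and_iff_left hx, div_lt_iff₀ (dist_pos.2 hx), sq, mul_lt_mul_iff_right₀ hR]

open Classical in
/-- The fold of `E` onto the closed ball `closedBall c R`: the identity inside the ball and the
inversion in its boundary sphere outside. -/
noncomputable def diskFold (c : E) (R : ℝ) (x : E) : E :=
  if x ∈ ball c R then x else inversion c R x

theorem diskFold_of_mem_ball (hx : x ∈ ball c R) : diskFold c R x = x :=
  if_pos hx

theorem diskFold_of_notMem_ball (hx : x ∉ ball c R) : diskFold c R x = inversion c R x :=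
  if_neg hx

theorem diskFold_mem_closedBall (hR : 0 < R) (c x : E) : diskFold c R x ∈ closedBall c R := by
  by_cases hx : x ∈ ball c R
  · rw [diskFold_of_mem_ball hx]
    exact ball_subset_closedBall hx
  · rw [diskFold_of_notMem_ball hx, mem_closedBall, dist_inversion_center]
    rw [mem_ball, not_lt] at hx
    exact div_le_of_le_mul₀ dist_nonneg hR.le (by nlinarith)

theorem lipschitzWith_diskFold (hR : 0 < R) (c : E) : LipschitzWith 1 (diskFold c R) := by
  have hid : EqOn (diskFold c R) id (closure (ball c R)) := fun x hx => by
    by_cases hxR : x ∈ ball c R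
    · exact diskFold_of_mem_ball hxR
    · rw [diskFold_of_notMem_ball hxR, id, inversion_of_mem_sphere]
      exact (closure_ball_subset_closedBall hx).antisymm (not_lt.1 hxR)
  have hcl : closure (ball c R)ᶜ = (ball c R)ᶜ := isOpen_ball.isClosed_compl.closure_eq
  refine lipschitzWith_of_lipschitzOnWith_closure (A := ball c R) (fun x hx y hy => ?_)
    (LipschitzOnWith.of_dist_le_mul fun x hx y hy => ?_)
  · rw [hid hx, hid hy]
    exact LipschitzWith.id x y
  · rw [hcl] at hx hy
    rw [diskFold_of_notMem_ball hx, diskFold_of_notMem_ball hy]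
    rw [mem_compl_iff, mem_ball, not_lt] at hx hy
    simpa only [div_self hR.ne', one_pow, NNReal.coe_one] using
      dist_inversion_inversion_le (R := R) hR hx hy

end DiskFold

section ConformalInvariance

variable {E : Type*} [NormedAddCommGroup E] [InnerProductSpace ℝ E] {c x : E} {R : ℝ}

theorem differentiableAt_comp_inversion_iff {f : E → ℝ} (hR : R ≠ 0) (hx : x ≠ c) :
    DifferentiableAt ℝ (f ∘ inversion c R) x ↔ DifferentiableAt ℝ f (inversion c R x) := by
  have hinv : DifferentiableAt ℝ (inversion c R) x := (hasFDerivAt_inversion hx).differentiableAt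
  have hinv' : DifferentiableAt ℝ (inversion c R) (inversion c R x) :=
    (hasFDerivAt_inversion ((inversion_eq_center hR).not.2 hx)).differentiableAt
  refine ⟨fun h => ?_, fun h => h.comp x hinv⟩
  rw [← inversion_inversion c hR x] at h
  simpa only [Function.comp_assoc, (inversion_involutive c hR).comp_self, Function.comp_id] using
    h.comp (inversion c R x) hinv'

theorem gradient_comp_inversion [CompleteSpace E] (f : E → ℝ) (hR : R ≠ 0) (hx : x ≠ c) :
    ∇ (f ∘ inversion c R) x =
      (R / dist x c) ^ 2 • (ℝ ∙ (x - c))ᗮ.reflection (∇ f (inversion c R x)) := by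
  by_cases hf : DifferentiableAt ℝ f (inversion c R x)
  · refine ext_inner_right ℝ fun v => ?_
    rw [inner_gradient_left, (hf.hasFDerivAt.comp x (hasFDerivAt_inversion hx)).fderiv,
      inner_smul_left, ← LinearIsometryEquiv.inner_map_map (ℝ ∙ (x - c))ᗮ.reflection,
      Submodule.reflection_reflection, inner_gradient_left]
    simp
  · rw [gradient_eq_zero_of_not_differentiableAt hf, map_zero, smul_zero,
      gradient_eq_zero_of_not_differentiableAt fun h =>
        hf ((differentiableAt_comp_inversion_iff hR hx).1 h)]

theorem inner_gradient_comp_inversion [CompleteSpace E] (u ψ : E → ℝ) (hR : R ≠ 0) (hx : x ≠ c) :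
    ⟪∇ u x, ∇ (ψ ∘ inversion c R) x⟫ = (R / dist x c) ^ 4 *
      ⟪∇ (u ∘ inversion c R) (inversion c R x), ∇ ψ (inversion c R x)⟫ := by
  have hu : (u ∘ inversion c R) ∘ inversion c R = u := by
    rw [Function.comp_assoc, (inversion_involutive c hR).comp_self, Function.comp_id]
  rw [gradient_comp_inversion ψ hR hx, ← hu, gradient_comp_inversion _ hR hx, hu,
    inner_smul_left, inner_smul_right, LinearIsometryEquiv.inner_map_map]
  simp only [conj_trivial]
  ring

theorem gradient_comp_diskFold_of_mem_ball [CompleteSpace E] (u : E → ℝ) (hx : x ∈ ball c R) :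
    ∇ (u ∘ diskFold c R) x = ∇ u x := by
  refine EventuallyEq.gradient_eq ?_
  filter_upwards [isOpen_ball.mem_nhds hx] with y hy
  rw [Function.comp_apply, diskFold_of_mem_ball hy]

theorem gradient_comp_diskFold_of_notMem_closedBall [CompleteSpace E] (u : E → ℝ)
    (hx : x ∉ closedBall c R) : ∇ (u ∘ diskFold c R) x = ∇ (u ∘ inversion c R) x := by
  refine EventuallyEq.gradient_eq ?_
  filter_upwards [isClosed_closedBall.isOpen_compl.mem_nhds hx] with y hy
  rw [Function.comp_apply, diskFold_of_notMem_ball fun h => hy (ball_subset_closedBall h),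
    Function.comp_apply]

theorem exists_lipschitzWith_eq_comp_inversion {ψ : E → ℝ} {C : ℝ≥0} (hψ : LipschitzWith C ψ)
    (hc : HasCompactSupport ψ) (c : E) (hR : 0 < R) :
    ∃ (F : E → ℝ) (C' : ℝ≥0), LipschitzWith C' F ∧ ∀ x ≠ c, F x = ψ (inversion c R x) := by
  obtain ⟨ρ, hρ, hsub⟩ := hc.isBounded.subset_ball_lt 0 c
  set r := R ^ 2 / ρ with hr
  have hr0 : 0 < r := by positivity
  have hsmall : ∀ x ≠ c, dist x c ≤ r → ψ (inversion c R x) = 0 := fun x hx hxr => by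
    refine image_eq_zero_of_notMem_tsupport fun h => ?_
    have hlt : dist (inversion c R x) c < ρ := hsub h
    rw [dist_inversion_center, div_lt_iff₀ (dist_pos.2 hx)] at hlt
    rw [hr, le_div_iff₀ hρ, mul_comm] at hxr
    exact hlt.not_ge hxr
  clear_value r
  have hdist : Continuous fun x => dist x c := by fun_prop
  have hcl : closure {x | r ≤ dist x c} = {x | r ≤ dist x c} :=
    (isClosed_le continuous_const hdist).closure_eq
  refine ⟨{x | r ≤ dist x c}.indicator (ψ ∘ inversion c R), C * ((R / r) ^ 2).toNNReal,
    lipschitzWith_indicator (LipschitzOnWith.of_dist_le_mul fun x hx y hy => ?_) fun x hx => ?_,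
    fun x hx => ?_⟩
  · rw [hcl] at hx hy
    rw [NNReal.coe_mul, Real.coe_toNNReal _ (by positivity), mul_assoc]
    exact (hψ.dist_le_mul _ _).trans (by gcongr; exact dist_inversion_inversion_le hr0 hx hy)
  · have hxr : r = dist x c := frontier_le_subset_eq continuous_const hdist hx
    exact hsmall x (dist_pos.1 (hr0.trans_eq hxr)) hxr.ge
  · by_cases hxr : r ≤ dist x c
    · exact indicator_of_mem (s := {x | r ≤ dist x c}) hxr _
    · rw [indicator_of_notMem (s := {x | r ≤ dist x c}) hxr, hsmall x hx (not_le.1 hxr).le]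

variable [FiniteDimensional ℝ E]

theorem abs_det_smul_reflection (k : ℝ) (U : Submodule ℝ E) :
    |(k • (U.reflection : E →L[ℝ] E)).det| = |k| ^ Module.finrank ℝ E := by
  have hlin : ((k • (U.reflection : E →L[ℝ] E) : E →L[ℝ] E) : E →ₗ[ℝ] E) =
    k • U.reflection.toLinearMap := rfl
  rw [ContinuousLinearMap.det, hlin, LinearMap.det_smul, U.det_reflection, abs_mul, abs_pow,
    abs_pow, abs_neg, abs_one, one_pow, mul_one]

variable [MeasurableSpace E] [BorelSpace E] {u ψ : E → ℝ} {K C : ℝ≥0}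

theorem setIntegral_image_inversion_inner_gradient (hE : Module.finrank ℝ E = 2) (u ψ : E → ℝ)
    (hR : R ≠ 0) {A : Set E} (hA : MeasurableSet A) (hcA : c ∉ A) :
    ∫ x in inversion c R '' A, ⟪∇ (u ∘ inversion c R) x, ∇ ψ x⟫ =
      ∫ x in A, ⟪∇ u x, ∇ (ψ ∘ inversion c R) x⟫ := by
  have hne : ∀ x ∈ A, x ≠ c := fun x hx h => hcA (h ▸ hx)
  rw [integral_image_eq_integral_abs_det_fderiv_smul volume hA
    (fun x hx => (hasFDerivAt_inversion (hne x hx)).hasFDerivWithinAt)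
    (inversion_injective c hR).injOn]
  refine setIntegral_congr_fun hA fun x hx => ?_
  simp only [abs_det_smul_reflection, hE, smul_eq_mul, inner_gradient_comp_inversion u ψ hR
    (hne x hx), sq_abs]
  ring

theorem integrableOn_ball_inner_gradient {f : E → ℝ} (hu : LipschitzWith K u)
    (hf : LipschitzWith C f) : IntegrableOn (fun x => ⟪∇ u x, ∇ f x⟫) (ball c R) := by
  refine IntegrableOn.of_bound measure_ball_lt_top
    (measurable_inner_gradient u f).aestronglyMeasurable (K * C) (ae_of_all _ fun x => ?_)
  refine (norm_inner_le_norm _ _).trans ?_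
  gcongr
  exacts [norm_gradient_le_of_lipschitzWith hu, norm_gradient_le_of_lipschitzWith hf]

theorem IsWeakSolution.setIntegral_ball_inner_gradient_congr {f g : E → ℝ} {C' : ℝ≥0}
    (hw : IsWeakSolution 1 u (closedBall c R)) (hR : R ≠ 0) (hu : LipschitzWith K u)
    (hf : LipschitzWith C f) (hg : LipschitzWith C' g) (hfg : EqOn f g (sphere c R)) :
    ∫ x in ball c R, ⟪∇ u x, ∇ f x⟫ = ∫ x in ball c R, ⟪∇ u x, ∇ g x⟫ := by
  have hzero := hw.setIntegral_ball_inner_gradient_eq_zero hR subset_rfl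
    (hf.sub hg).lipschitzOnWith fun x hx => sub_eq_zero.2 (hfg hx)
  have hdiff : ∀ᵐ x, ⟪∇ u x, ∇ (fun y => f y - g y) x⟫ = ⟪∇ u x, ∇ f x⟫ - ⟪∇ u x, ∇ g x⟫ := by
    filter_upwards [hf.ae_differentiableAt, hg.ae_differentiableAt] with x hfx hgx
    rw [← inner_sub_right, ← gradient_sub hfx hgx]
    rfl
  rw [integral_congr_ae (ae_restrict_of_ae hdiff), integral_sub
    (integrableOn_ball_inner_gradient hu hf) (integrableOn_ball_inner_gradient hu hg)] at hzero
  exact sub_eq_zero.1 hzero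

theorem IsWeakSolution.setIntegral_compl_closedBall_inner_gradient_comp_inversion
    (hw : IsWeakSolution 1 u (closedBall c R)) (hE : Module.finrank ℝ E = 2) (hR : 0 < R)
    (hu : LipschitzWith K u) (hψ : LipschitzWith C ψ) (hc : HasCompactSupport ψ) :
    ∫ x in (closedBall c R)ᶜ, ⟪∇ (u ∘ inversion c R) x, ∇ ψ x⟫ =
      ∫ x in ball c R, ⟪∇ u x, ∇ ψ x⟫ := by
  obtain ⟨F, C', hF, hFψ⟩ := exists_lipschitzWith_eq_comp_inversion hψ hc c hR
  have : Nontrivial E := Module.nontrivial_of_finrank_pos (R := ℝ) (hE ▸ two_pos)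
  have hmeas : MeasurableSet (ball c R \ {c}) := measurableSet_ball.diff (measurableSet_singleton c)
  have hgrad : ∀ x ∈ ball c R \ {c}, ⟪∇ u x, ∇ (ψ ∘ inversion c R) x⟫ = ⟪∇ u x, ∇ F x⟫ :=
    fun x hx => by
      have hev : F =ᶠ[𝓝 x] ψ ∘ inversion c R := by
        filter_upwards [isOpen_ne.mem_nhds hx.2] with y hy using hFψ y hy
      rw [hev.gradient_eq]
  have hsphere : EqOn F ψ (sphere c R) := fun x hx => by
    rw [hFψ x (ne_of_mem_sphere hx hR.ne'), inversion_of_mem_sphere hx]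
  rw [← inversion_image_ball_sdiff_center c hR,
    setIntegral_image_inversion_inner_gradient hE u ψ hR.ne' hmeas fun h => h.2 rfl,
    setIntegral_congr_fun hmeas hgrad,
    setIntegral_congr_set (sdiff_null_ae_eq_self (measure_singleton c)),
    hw.setIntegral_ball_inner_gradient_congr hR.ne' hu hF hψ hsphere]

theorem IsWeakSolution.integral_inner_gradient_comp_diskFold
    (hw : IsWeakSolution 1 u (closedBall c R)) (hE : Module.finrank ℝ E = 2) (hR : 0 < R)
    (hu : LipschitzWith K u) (hψ : LipschitzWith C ψ) (hc : HasCompactSupport ψ) :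
    ∫ x, ⟪∇ (u ∘ diskFold c R) x, ∇ ψ x⟫ = 2 * ∫ x in ball c R, ⟪∇ u x, ∇ ψ x⟫ := by
  have hint : Integrable fun x => ⟪∇ (u ∘ diskFold c R) x, ∇ ψ x⟫ :=
    integrable_inner_gradient (hu.comp (lipschitzWith_diskFold hR c)) hψ hc
  have hsphere : ((ball c R)ᶜ : Set E) =ᵐ[volume] (closedBall c R)ᶜ := by
    rw [← closedBall_sdiff_sphere]
    exact (sdiff_null_ae_eq_self (Measure.addHaar_sphere_of_ne_zero volume c hR.ne')).compl
  calc ∫ x, ⟪∇ (u ∘ diskFold c R) x, ∇ ψ x⟫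
      = (∫ x in ball c R, ⟪∇ (u ∘ diskFold c R) x, ∇ ψ x⟫) +
          ∫ x in (closedBall c R)ᶜ, ⟪∇ (u ∘ diskFold c R) x, ∇ ψ x⟫ := by
        rw [← integral_add_compl measurableSet_ball hint]
        exact congrArg _ (setIntegral_congr_set hsphere)
    _ = (∫ x in ball c R, ⟪∇ u x, ∇ ψ x⟫) +
          ∫ x in (closedBall c R)ᶜ, ⟪∇ (u ∘ inversion c R) x, ∇ ψ x⟫ := by
        congr 1
        · exact setIntegral_congr_fun measurableSet_ball fun x hx => by
            rw [gradient_comp_diskFold_of_mem_ball u hx]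
        · exact setIntegral_congr_fun measurableSet_closedBall.compl fun x hx => by
            rw [gradient_comp_diskFold_of_notMem_closedBall u hx]
    _ = 2 * ∫ x in ball c R, ⟪∇ u x, ∇ ψ x⟫ := by
        rw [hw.setIntegral_compl_closedBall_inner_gradient_comp_inversion hE hR hu hψ hc, two_mul]

end ConformalInvariance

section FoldSum

variable {ι E : Type*} [NormedAddCommGroup E] [InnerProductSpace ℝ E]
  {c : ι → E} {R κ : ι → ℝ} {u : E → ℝ} {K : ℝ≥0}

theorem lipschitzWith_sum_mul_comp_diskFold (t : Finset ι) (s : ι → ℝ) {L : ι → ℝ≥0}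
    (hR : ∀ i, 0 < R i) (hL : ∀ i, LipschitzOnWith (L i) u (closedBall (c i) (R i))) :
    LipschitzWith (∑ i ∈ t, ‖s i‖₊ * L i) fun x => ∑ i ∈ t, s i * u (diskFold (c i) (R i) x) := by
  refine LipschitzWith.of_dist_le_mul fun x y => ?_
  rw [NNReal.coe_sum, Finset.sum_mul]
  refine dist_sum_sum_le_of_le t fun i _ => ?_
  rw [dist_eq_norm, ← mul_sub, norm_mul, NNReal.coe_mul, coe_nnnorm, mul_assoc, ← dist_eq_norm]
  gcongr
  calc dist (u (diskFold (c i) (R i) x)) (u (diskFold (c i) (R i) y))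
      ≤ L i * dist (diskFold (c i) (R i) x) (diskFold (c i) (R i) y) :=
        (hL i).dist_le_mul _ (diskFold_mem_closedBall (hR i) _ _) _
          (diskFold_mem_closedBall (hR i) _ _)
    _ ≤ L i * dist x y := by
        gcongr
        simpa only [NNReal.coe_one, one_mul] using
          (lipschitzWith_diskFold (hR i) (c i)).dist_le_mul x y

variable [Fintype ι]

/-- The function `u` corrected by its reflections in the disks `ball (c i) (R i)`. The weights
`(κ i - 1) / 2` are the ones for which the sum is harmonic across the circles when `u` solves the
conductivity equation with conductivity `κ i` in the `i`-th disk and `1` outside the disks. -/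
noncomputable def foldSum (κ : ι → ℝ) (c : ι → E) (R : ι → ℝ) (u : E → ℝ) (x : E) : ℝ :=
  u x + ∑ i, (κ i - 1) / 2 * u (diskFold (c i) (R i) x)

theorem exists_lipschitzWith_foldSum (hR : ∀ i, 0 < R i) (hu : LipschitzWith K u) :
    ∃ K', LipschitzWith K' (foldSum κ c R u) :=
  ⟨_, hu.add (lipschitzWith_sum_mul_comp_diskFold Finset.univ _ hR fun _ => hu.lipschitzOnWith)⟩

theorem abs_foldSum_le {Ω : Set E} {M : ℝ} (hR : ∀ i, 0 < R i)
    (hsub : ∀ i, closedBall (c i) (R i) ⊆ Ω) (hM : ∀ x ∈ Ω, |u x| ≤ M) {x : E} (hx : x ∈ Ω) :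
    |foldSum κ c R u x| ≤ (1 + ∑ i, |(κ i - 1) / 2|) * M := by
  rw [add_mul, one_mul, Finset.sum_mul]
  refine (abs_add_le _ _).trans (add_le_add (hM x hx) ?_)
  refine (Finset.abs_sum_le_sum_abs _ _).trans (Finset.sum_le_sum fun i _ => ?_)
  rw [abs_mul]
  gcongr
  exact hM _ (hsub i (diskFold_mem_closedBall (hR i) _ _))

theorem gradient_foldSum [CompleteSpace E] {x : E} (hu : DifferentiableAt ℝ u x)
    (hfold : ∀ i, DifferentiableAt ℝ (u ∘ diskFold (c i) (R i)) x) :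
    ∇ (foldSum κ c R u) x =
      ∇ u x + ∑ i, ((κ i - 1) / 2) • ∇ (u ∘ diskFold (c i) (R i)) x := by
  have hderiv := (hu.hasFDerivAt.add (HasFDerivAt.fun_sum (u := Finset.univ) fun i _ =>
    (hfold i).hasFDerivAt.const_mul ((κ i - 1) / 2))).fderiv
  refine ext_inner_right ℝ fun v => ?_
  rw [inner_gradient_left]
  refine (congrArg (· v) hderiv).trans ?_
  simp [inner_add_left, sum_inner, inner_smul_left]

end FoldSum

section DiskConductivity

variable {ι E : Type*} [NormedAddCommGroup E]

/-- The conductivity `a` takes the value `κ i` on the disk of centre `c i` and radius `R i` and the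
value `1` outside the disks, which do not overlap (but may touch). -/
structure IsDiskConductivity (a : E → ℝ) (c : ι → E) (R κ : ι → ℝ) : Prop where
  radius_pos : ∀ i, 0 < R i
  pairwise_disjoint : Pairwise (Function.onFun Disjoint fun i => ball (c i) (R i))
  eq_of_mem_ball : ∀ i, ∀ x ∈ ball (c i) (R i), a x = κ i
  eq_one : ∀ x, (∀ i, x ∉ ball (c i) (R i)) → a x = 1

namespace IsDiskConductivity

variable {a u : E → ℝ} {c : ι → E} {R κ : ι → ℝ} {Ω : Set E} {K : ℝ≥0}

theorem pos (ha : IsDiskConductivity a c R κ) (hκ : ∀ i, 0 < κ i) (x : E) : 0 < a x := by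
  by_cases h : ∃ i, x ∈ ball (c i) (R i)
  · obtain ⟨i, hi⟩ := h
    exact (hκ i).trans_eq (ha.eq_of_mem_ball i x hi).symm
  · exact one_pos.trans_eq (ha.eq_one x (not_exists.1 h)).symm

theorem eq_one_add_sum [Fintype ι] (ha : IsDiskConductivity a c R κ) (x : E) :
    a x = 1 + ∑ i, (ball (c i) (R i)).indicator (fun _ => κ i - 1) x := by
  by_cases h : ∃ i, x ∈ ball (c i) (R i)
  · obtain ⟨i, hi⟩ := h
    rw [Finset.sum_eq_single i (fun j _ hj => indicator_of_notMem
        (disjoint_left.1 (ha.pairwise_disjoint hj.symm) hi) _) (by simp),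
      indicator_of_mem hi, ha.eq_of_mem_ball i x hi, add_sub_cancel]
  · have hout := not_exists.1 h
    rw [ha.eq_one x hout, Finset.sum_eq_zero fun i _ => indicator_of_notMem (hout i) _, add_zero]

variable [InnerProductSpace ℝ E] [FiniteDimensional ℝ E] [MeasurableSpace E] [BorelSpace E]

theorem locallyIntegrable [Finite ι] (ha : IsDiskConductivity a c R κ) :
    LocallyIntegrable a := by
  cases nonempty_fintype ι
  rw [funext ha.eq_one_add_sum]
  exact (locallyIntegrable_const 1).add (locallyIntegrable_finsetSum _ fun i _ =>
    (locallyIntegrable_const (κ i - 1)).indicator measurableSet_ball)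

variable [Fintype ι]

theorem integral_mul_inner_gradient (ha : IsDiskConductivity a c R κ) {θ : E → ℝ} {C : ℝ≥0}
    (hu : LipschitzWith K u) (hθ : LipschitzWith C θ) (hc : HasCompactSupport θ) :
    ∫ x, a x * ⟪∇ u x, ∇ θ x⟫ = (∫ x, ⟪∇ u x, ∇ θ x⟫) +
      ∑ i, (κ i - 1) * ∫ x in ball (c i) (R i), ⟪∇ u x, ∇ θ x⟫ := by
  have hint := integrable_inner_gradient hu hθ hc
  have hpt (x : E) : a x * ⟪∇ u x, ∇ θ x⟫ = ⟪∇ u x, ∇ θ x⟫ +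
      ∑ i, (κ i - 1) * (ball (c i) (R i)).indicator (fun y => ⟪∇ u y, ∇ θ y⟫) x := by
    rw [ha.eq_one_add_sum x, add_mul, one_mul, Finset.sum_mul]
    refine congrArg _ (Finset.sum_congr rfl fun i _ => ?_)
    by_cases hx : x ∈ ball (c i) (R i)
    · rw [indicator_of_mem hx, indicator_of_mem hx]
    · rw [indicator_of_notMem hx, indicator_of_notMem hx, zero_mul, mul_zero]
  have hint' (i : ι) : Integrable fun x =>
      (κ i - 1) * (ball (c i) (R i)).indicator (fun y => ⟪∇ u y, ∇ θ y⟫) x :=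
    (hint.indicator measurableSet_ball).const_mul _
  simp only [hpt]
  rw [integral_add hint (integrable_finsetSum _ fun i _ => hint' i),
    integral_finsetSum _ fun i _ => hint' i]
  simp only [integral_const_mul, integral_indicator measurableSet_ball]

theorem isWeakSolution_foldSum (ha : IsDiskConductivity a c R κ) (hκ : ∀ i, κ i ≠ 0)
    (hE : Module.finrank ℝ E = 2) (hsub : ∀ i, closedBall (c i) (R i) ⊆ Ω)
    (hu : LipschitzWith K u) (hw : IsWeakSolution a u Ω) :
    IsWeakSolution 1 (foldSum κ c R u) Ω := by
  intro θ C hθ hc hs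
  have hfold (i : ι) : LipschitzWith (K * 1) (u ∘ diskFold (c i) (R i)) :=
    hu.comp (lipschitzWith_diskFold (ha.radius_pos i) _)
  have hreflect (i : ι) : ∫ x, ⟪∇ (u ∘ diskFold (c i) (R i)) x, ∇ θ x⟫ =
      2 * ∫ x in ball (c i) (R i), ⟪∇ u x, ∇ θ x⟫ := by
    have hball : IsWeakSolution 1 u (closedBall (c i) (R i)) := by
      refine hw.of_ae_eq_const (hsub i) (hκ i) ?_
      filter_upwards [measure_eq_zero_iff_ae_notMem.1
        (Measure.addHaar_sphere_of_ne_zero volume (c i) (ha.radius_pos i).ne')] with x hx hxc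
      exact ha.eq_of_mem_ball i x (lt_of_le_of_ne hxc hx)
    exact hball.integral_inner_gradient_comp_diskFold hE (ha.radius_pos i) hu hθ hc
  have hgrad : ∀ᵐ x, (1 : E → ℝ) x * ⟪∇ (foldSum κ c R u) x, ∇ θ x⟫ = ⟪∇ u x, ∇ θ x⟫ +
      ∑ i, (κ i - 1) / 2 * ⟪∇ (u ∘ diskFold (c i) (R i)) x, ∇ θ x⟫ := by
    filter_upwards [hu.ae_differentiableAt, ae_all_iff.2 fun i => (hfold i).ae_differentiableAt]
      with x hx hxi
    simp only [gradient_foldSum hx hxi, Pi.one_apply, one_mul, inner_add_left, sum_inner,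
      real_inner_smul_left]
  have hint (i : ι) : Integrable fun x =>
      (κ i - 1) / 2 * ⟪∇ (u ∘ diskFold (c i) (R i)) x, ∇ θ x⟫ :=
    (integrable_inner_gradient (hfold i) hθ hc).const_mul _
  rw [integral_congr_ae hgrad, integral_add (integrable_inner_gradient hu hθ hc)
    (integrable_finsetSum _ fun i _ => hint i), integral_finsetSum _ fun i _ => hint i,
    ← hw hθ hc hs, ha.integral_mul_inner_gradient hu hθ hc]
  refine congrArg _ (Finset.sum_congr rfl fun i _ => ?_)
  rw [integral_const_mul, hreflect]
  ring

end IsDiskConductivity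

end DiskConductivity

section LipschitzConstants

theorem exists_isLeast_lipschitzOnWith {α β : Type*} [PseudoMetricSpace α] [PseudoMetricSpace β]
    {f : α → β} {s : Set α} {K : ℝ≥0} (hf : LipschitzOnWith K f s) :
    ∃ L, IsLeast {L : ℝ≥0 | LipschitzOnWith L f s} L := by
  have hclosed : IsClosed {L : ℝ≥0 | LipschitzOnWith L f s} := by
    simp only [lipschitzOnWith_iff_dist_le_mul, ofPred_forall]
    exact isClosed_biInter fun x _ => isClosed_biInter fun y _ =>
      isClosed_le continuous_const (by fun_prop)
  exact ⟨_, hclosed.csInf_mem ⟨K, hf⟩ (OrderBot.bddBelow _), fun _ h =>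
    csInf_le (OrderBot.bddBelow _) h⟩

/-- The strength of a disk of conductivity `k` in a background of conductivity `1`: how much the
reflections in that disk can contribute to the Lipschitz constant of a solution. With
`s = (k - 1) / 2` the weight of a reflection in `foldSum`, it equals `|s| / (1 + s + |s|)`. -/
noncomputable def contrast (k : ℝ) : ℝ :=
  |k - 1| / (k + 1 + |k - 1|)

theorem contrast_lt_half {k : ℝ} (hk : 0 < k) : contrast k < 1 / 2 := by
  have habs : |k - 1| < k + 1 := abs_lt.2 ⟨by linarith, by linarith⟩
  rw [contrast, div_lt_div_iff₀ (by positivity) two_pos]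
  linarith

variable {ι E : Type*} [Fintype ι] [NormedAddCommGroup E] [InnerProductSpace ℝ E]
  {c : ι → E} {R κ : ι → ℝ} {u : E → ℝ} {H : ℝ≥0}

theorem mul_le_add_sum_of_lipschitzOnWith_foldSum {L : ι → ℝ≥0} (hR : ∀ i, 0 < R i) {i : ι}
    (hκ : -1 < κ i)
    (hL : ∀ j, LipschitzOnWith (L j) u (closedBall (c j) (R j)))
    (hmin : L i ∈ lowerBounds {C : ℝ≥0 | LipschitzOnWith C u (closedBall (c i) (R i))})
    (hH : LipschitzOnWith H (foldSum κ c R u) (ball (c i) (R i))) :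
    ((κ i + 1) / 2 + |(κ i - 1) / 2|) * L i ≤ H + ∑ j, |(κ j - 1) / 2| * L j := by
  classical
  set B := H + ∑ j ∈ Finset.univ.erase i, ‖(κ j - 1) / 2‖₊ * L j
  have hpos : 0 < (κ i + 1) / 2 := by linarith
  have hu : ∀ x ∈ ball (c i) (R i), u x = ((κ i + 1) / 2)⁻¹ * (foldSum κ c R u x -
      ∑ j ∈ Finset.univ.erase i, (κ j - 1) / 2 * u (diskFold (c j) (R j) x)) := by
    intro x hx
    rw [eq_inv_mul_iff_mul_eq₀ hpos.ne', foldSum, ← Finset.add_sum_erase _ _ (Finset.mem_univ i),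
      diskFold_of_mem_ball hx]
    ring
  have hball : LipschitzOnWith (‖((κ i + 1) / 2)⁻¹‖₊ * B) u (ball (c i) (R i)) := by
    have hdiff := hH.sub (lipschitzWith_sum_mul_comp_diskFold
      (Finset.univ.erase i) (fun j => (κ j - 1) / 2) hR hL).lipschitzOnWith
    intro x hx y hy
    rw [hu x hx, hu y hy]
    exact (lipschitzWith_smul ((κ i + 1) / 2)⁻¹).comp_lipschitzOnWith hdiff hx hy
  have hclosedBall : LipschitzOnWith (‖((κ i + 1) / 2)⁻¹‖₊ * B) u (closedBall (c i) (R i)) := by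
    have hcont := (hL i).continuousOn
    rw [← closure_ball _ (hR i).ne'] at hcont ⊢
    exact hball.closure hcont
  have hLi : (κ i + 1) / 2 * L i ≤ B := by
    have hle := NNReal.coe_le_coe.2 (hmin hclosedBall)
    rwa [NNReal.coe_mul, coe_nnnorm, Real.norm_of_nonneg (inv_nonneg.2 hpos.le),
      ← div_eq_inv_mul, le_div_iff₀' hpos] at hle
  calc ((κ i + 1) / 2 + |(κ i - 1) / 2|) * L i
      ≤ B + |(κ i - 1) / 2| * L i := by rw [add_mul]; gcongr
    _ = H + ∑ j, |(κ j - 1) / 2| * L j := by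
      rw [← Finset.sum_erase_add _ _ (Finset.mem_univ i), ← add_assoc]
      simp only [B, NNReal.coe_add, NNReal.coe_sum, NNReal.coe_mul, coe_nnnorm, Real.norm_eq_abs]

theorem lipschitzOnWith_of_lipschitzOnWith_foldSum {K : ℝ≥0} {U : Set E} (hR : ∀ i, 0 < R i)
    (hκ : ∀ i, -1 < κ i) (hcontrast : ∑ i, contrast (κ i) < 1)
    (hU : ∀ i, closedBall (c i) (R i) ⊆ U) (hu : LipschitzOnWith K u U)
    (hH : LipschitzOnWith H (foldSum κ c R u) U) :
    LipschitzOnWith (H / (1 - ∑ i, contrast (κ i)).toNNReal) u U := by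
  choose L hL using fun i => exists_isLeast_lipschitzOnWith (hu.mono (hU i))
  set T := H + ∑ j, ‖(κ j - 1) / 2‖₊ * L j
  have huT : LipschitzOnWith T u U := by
    have hdiff := hH.sub (lipschitzWith_sum_mul_comp_diskFold Finset.univ (fun i => (κ i - 1) / 2)
      hR fun i => (hL i).1).lipschitzOnWith
    simpa only [foldSum, add_sub_cancel_right] using hdiff
  have hcoe : (T : ℝ) = H + ∑ j, |(κ j - 1) / 2| * L j := by
    simp only [T, NNReal.coe_add, NNReal.coe_sum, NNReal.coe_mul, coe_nnnorm, Real.norm_eq_abs]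
  have hterm (i : ι) : |(κ i - 1) / 2| * L i ≤ contrast (κ i) * T := by
    have hi := mul_le_add_sum_of_lipschitzOnWith_foldSum hR (hκ i)
      (fun j => (hL j).1) (hL i).2 (hH.mono (ball_subset_closedBall.trans (hU i)))
    have hpos : 0 < κ i + 1 := by linarith [hκ i]
    rw [← hcoe, abs_div, abs_two] at hi
    rw [abs_div, abs_two, contrast, div_mul_eq_mul_div, div_mul_eq_mul_div,
      div_le_div_iff₀ two_pos (by positivity)]
    linear_combination 2 * |κ i - 1| * hi
  have hT : (1 - ∑ i, contrast (κ i)) * T ≤ H := by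
    have hsum := Finset.sum_le_sum fun i (_ : i ∈ Finset.univ) => hterm i
    rw [← Finset.sum_mul] at hsum
    linarith
  refine huT.weaken ?_
  rw [← NNReal.coe_le_coe, NNReal.coe_div, Real.coe_toNNReal _ (sub_pos.2 hcontrast).le,
    le_div_iff₀' (sub_pos.2 hcontrast)]
  exact hT

end LipschitzConstants

theorem IsDiskConductivity.lipschitzOnWith {ι E : Type*} [Fintype ι] [NormedAddCommGroup E]
    [InnerProductSpace ℝ E] [FiniteDimensional ℝ E] [MeasurableSpace E] [BorelSpace E]
    {a u : E → ℝ} {c : ι → E} {R κ : ι → ℝ} {Ω : Set E} {K M r : ℝ≥0}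
    (ha : IsDiskConductivity a c R κ) (hE : Module.finrank ℝ E = 2) (hκ : ∀ i, 0 < κ i)
    (hcontrast : ∑ i, contrast (κ i) < 1) (hr : 0 < r)
    (hsub : ∀ i, closedBall (c i) (R i) ⊆ {x | ball x r ⊆ Ω}) (hΩ : IsOpen Ω)
    (hb : Bornology.IsBounded Ω) (hu : LipschitzWith K u) (hw : IsWeakSolution a u Ω)
    (hM : ∀ x ∈ frontier Ω, |u x| ≤ M) :
    LipschitzOnWith (4 / r * (1 + ∑ i, ‖(κ i - 1) / 2‖₊) * M /
      (1 - ∑ i, contrast (κ i)).toNNReal) u {x | ball x r ⊆ Ω} := by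
  have : Nontrivial E := Module.nontrivial_of_finrank_pos (R := ℝ) (hE ▸ two_pos)
  have hsubΩ (i : ι) : closedBall (c i) (R i) ⊆ Ω := fun x hx => hsub i hx (mem_ball_self hr)
  have huM : ∀ x ∈ Ω, |u x| ≤ M :=
    hw.abs_le_of_frontier_abs_le hΩ hb ha.locallyIntegrable (ha.pos hκ) hu hM
  have hharm : IsWeakSolution 1 (foldSum κ c R u) Ω :=
    ha.isWeakSolution_foldSum (fun i => (hκ i).ne') hE hsubΩ hu hw
  obtain ⟨K', hfoldSum⟩ := exists_lipschitzWith_foldSum (κ := κ) (c := c) ha.radius_pos hu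
  have hbound : ∀ x ∈ Ω,
      |foldSum κ c R u x| ≤ ↑((1 + ∑ i, ‖(κ i - 1) / 2‖₊) * M) := by
    intro x hx
    push_cast
    exact abs_foldSum_le ha.radius_pos hsubΩ huM hx
  have hH := hharm.lipschitzOnWith_of_abs_le hfoldSum hbound hr
  rw [hE, Nat.cast_ofNat, ← mul_assoc, show (2 : ℝ≥0) * 2 = 4 by norm_num] at hH
  exact lipschitzOnWith_of_lipschitzOnWith_foldSum ha.radius_pos
    (fun i => neg_one_lt_zero.trans (hκ i)) hcontrast hsub hu.lipschitzOnWith hH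

section Plane

variable {Ω : Set (EuclideanSpace ℝ (Fin 2))} {φ : EuclideanSpace ℝ (Fin 2) → ℝ}

theorem sum_pd_mul_pd (u ψ : EuclideanSpace ℝ (Fin 2) → ℝ) (x : EuclideanSpace ℝ (Fin 2)) :
    ∑ i, pd i u x * pd i ψ x = ⟪∇ u x, ∇ ψ x⟫ := by
  simp only [pd, ← inner_gradient_left, PiLp.inner_apply]
  simp [mul_comm]

theorem innerReg_subset_innerReg {σ τ : ℝ} (h : σ ≤ τ) : innerReg Ω τ ⊆ innerReg Ω σ :=
  fun _ hx => ⟨hx.1, h.trans hx.2⟩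

theorem ball_subset_of_mem_innerReg {σ : ℝ} {x : EuclideanSpace ℝ (Fin 2)}
    (hx : x ∈ innerReg Ω σ) : ball x σ ⊆ Ω := by
  intro y hy
  by_contra hyΩ
  obtain ⟨z, hzball, hz⟩ := nonempty_inter_frontier_of_isPreconnected
    (convex_ball x σ).isPreconnected ⟨x, mem_ball_self (pos_of_mem_ball hy), hx.1⟩ ⟨y, hy, hyΩ⟩
  exact (hx.2.trans (infDist_le_dist_of_mem hz)).not_gt (mem_ball'.1 hzball)

theorem bdryNorm_nonneg : 0 ≤ bdryNorm Ω φ :=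
  Real.sSup_nonneg (forall_mem_image.2 fun _ _ => abs_nonneg _)

theorem abs_le_bdryNorm (hΩ : Bornology.IsBounded Ω) (hφ : ContinuousOn φ (frontier Ω))
    {x : EuclideanSpace ℝ (Fin 2)} (hx : x ∈ frontier Ω) : |φ x| ≤ bdryNorm Ω φ := by
  have hcompact : IsCompact (frontier Ω) :=
    isCompact_of_isClosed_isBounded isClosed_frontier (hΩ.closure.subset frontier_subset_closure)
  exact le_csSup (hcompact.image_of_continuousOn hφ.abs).bddAbove (mem_image_of_mem _ hx)

theorem isWeakSolution_of_setIntegral_pd {a u v : EuclideanSpace ℝ (Fin 2) → ℝ} {K : ℝ≥0}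
    (hΩ : IsOpen Ω) (ha : LocallyIntegrable a) (hv : LipschitzWith K v) (huv : EqOn u v Ω)
    (hw : ∀ ψ : EuclideanSpace ℝ (Fin 2) → ℝ, ContDiff ℝ (⊤ : ℕ∞) ψ → HasCompactSupport ψ →
      tsupport ψ ⊆ Ω → ∫ x in Ω, a x * ∑ i, pd i u x * pd i ψ x = 0) :
    IsWeakSolution a v Ω := by
  refine .of_contDiff hΩ ha hv fun ψ hψ hc hs => ?_
  have houtside : ∀ x ∉ Ω, a x * ⟪∇ v x, ∇ ψ x⟫ = 0 := fun x hx => by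
    rw [gradient_eq_zero_of_notMem_tsupport fun h => hx (hs h), inner_zero_right, mul_zero]
  rw [← setIntegral_eq_integral_of_forall_compl_eq_zero houtside, ← hw ψ hψ hc hs]
  refine setIntegral_congr_fun hΩ.measurableSet fun x hx => ?_
  have hgrad : ∇ u x = ∇ v x :=
    (huv.eventuallyEq_of_mem (hΩ.mem_nhds hx)).gradient.self_of_nhds
  simp only [sum_pd_mul_pd, hgrad]

theorem stmt0_general {ι : Type*} [Fintype ι] (μ : ℝ) (κ : ι → ℝ) (hμ : 0 < μ)
    (hκ : ∀ i, 0 < κ i) (hcontrast : ∑ i, contrast (κ i) < 1) :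
    ∃ C > 0, ∀ Ω : Set (EuclideanSpace ℝ (Fin 2)), IsOpen Ω → Bornology.IsBounded Ω →
      ∀ (a : EuclideanSpace ℝ (Fin 2) → ℝ) (c : ι → EuclideanSpace ℝ (Fin 2)) (R : ι → ℝ),
      IsDiskConductivity a c R κ →
      (∀ i, closure (ball (c i) (R i)) ⊆ innerReg Ω μ) →
      ∀ φ : EuclideanSpace ℝ (Fin 2) → ℝ, ContinuousOn φ (frontier Ω) →
      ∀ u : EuclideanSpace ℝ (Fin 2) → ℝ,
        (∃ K, LipschitzOnWith K u Ω) →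
        ContinuousOn u (closure Ω) →
        EqOn u φ (frontier Ω) →
        (∀ ψ : EuclideanSpace ℝ (Fin 2) → ℝ, ContDiff ℝ (⊤ : ℕ∞) ψ → HasCompactSupport ψ →
          tsupport ψ ⊆ Ω → ∫ x in Ω, a x * ∑ i, pd i u x * pd i ψ x = 0) →
        ∀ x ∈ innerReg Ω μ, ‖fderiv ℝ u x‖ ≤ C * bdryNorm Ω φ := by
  -- Half of the margin: a neighbourhood of each point of `innerReg Ω μ` keeps distance `r`.
  set r : ℝ≥0 := (μ / 2).toNNReal
  have hr : (r : ℝ) = μ / 2 := Real.coe_toNNReal _ (half_pos hμ).le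
  set C : ℝ≥0 := 4 / r * (1 + ∑ i, ‖(κ i - 1) / 2‖₊) / (1 - ∑ i, contrast (κ i)).toNNReal
  have hrpos : 0 < r := Real.toNNReal_pos.2 (half_pos hμ)
  have hC : 0 < C := by
    have := Real.toNNReal_pos.2 (sub_pos.2 hcontrast)
    positivity
  refine ⟨C, hC, fun Ω hΩo hΩb a c R ha hsub φ hφ u ⟨K, hu⟩ huc hbd hw x hx => ?_⟩
  obtain ⟨v, hv, huv⟩ := hu.extend_real
  have hvM : ∀ y ∈ frontier Ω, |v y| ≤ (bdryNorm Ω φ).toNNReal := fun y hy => by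
    rw [← huv.of_subset_closure huc hv.continuous.continuousOn subset_closure subset_rfl
      (frontier_subset_closure hy), hbd hy, Real.coe_toNNReal _ bdryNorm_nonneg]
    exact abs_le_bdryNorm hΩb hφ hy
  have hball : ∀ y ∈ innerReg Ω μ, ∀ z ∈ ball y r, ball z r ⊆ Ω := fun y hy z hz =>
    (ball_subset_ball' (by rw [mem_ball] at hz; linarith)).trans (ball_subset_of_mem_innerReg hy)
  have hdisks (i : ι) : closedBall (c i) (R i) ⊆ {y | ball y r ⊆ Ω} := by
    rw [← closure_ball _ (ha.radius_pos i).ne']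
    exact (hsub i).trans fun y hy => hball y hy y (mem_ball_self hrpos)
  have hlip := ha.lipschitzOnWith finrank_euclideanSpace_fin hκ hcontrast hrpos hdisks hΩo hΩb hv
    (isWeakSolution_of_setIntegral_pd hΩo ha.locallyIntegrable hv huv hw) hvM
  have hmem : {y | ball y r ⊆ Ω} ∈ 𝓝 x := mem_of_superset (ball_mem_nhds x hrpos) (hball x hx)
  rw [(huv.eventuallyEq_of_mem (hΩo.mem_nhds hx.1)).fderiv_eq]
  refine (norm_fderiv_le_of_lipschitzOn ℝ hmem hlip).trans_eq ?_
  rw [mul_div_right_comm, NNReal.coe_mul, Real.coe_toNNReal _ bdryNorm_nonneg]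

theorem isDiskConductivity_aFun {δ : ℝ} (hδ : 0 ≤ δ) (κp κm : ℝ) :
    IsDiskConductivity (aFun δ κp κm) ![0, ctr δ] (fun _ => 1) ![κp, κm] := by
  have hdisj : Disjoint (ball (0 : EuclideanSpace ℝ (Fin 2)) 1) (ball (ctr δ) 1) := by
    refine ball_disjoint_ball ?_
    calc (1 : ℝ) + 1 ≤ ‖ctr δ 1‖ := by
          rw [show ctr δ 1 = -2 - 2 * δ from rfl, Real.norm_eq_abs]
          linarith [neg_le_abs (-2 - 2 * δ)]
      _ ≤ dist 0 (ctr δ) := (PiLp.norm_apply_le _ _).trans_eq (dist_zero_left _).symm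
  refine ⟨fun _ => one_pos, ?_, ?_, ?_⟩
  · refine (pairwise_disjoint_on _).2 fun (i j : Fin 2) hij => ?_
    obtain ⟨rfl, rfl⟩ : i = 0 ∧ j = 1 := by omega
    exact hdisj
  · refine Fin.forall_fin_two.2 ⟨fun x hx => if_pos hx, fun x hx => ?_⟩
    exact (if_neg fun h => disjoint_left.1 hdisj h hx).trans (if_pos hx)
  · exact fun x hx => (if_neg (hx 0)).trans (if_neg (hx 1))

end Plane

/-- Theorem 1.1 (Li–Vogelius gradient estimate): there is a constant `C` depending only
on `Ω, μ, δ₀, κ⁺, κ⁻` such that any Lipschitz weak solution `u` of `div(a∇u)=0` with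
boundary value `φ` satisfies `ess sup_{Ω^μ} |∇u| ≤ C ‖φ‖_{L^∞(∂Ω)}`. -/
theorem stmt0 (Ω : Set (EuclideanSpace ℝ (Fin 2)))
    (hΩo : IsOpen Ω) (hΩb : Bornology.IsBounded Ω) (hΩs : SmoothBoundary Ω)
    (μ δ₀ κp κm : ℝ) (hμ : μ ∈ Ioo (0:ℝ) 1) (hδ₀ : 0 < δ₀)
    (hκp : 0 < κp) (hκm : 0 < κm) :
    ∃ C > 0, ∀ δ ∈ Ioo 0 δ₀,
      closure Bp ∪ closure (Bm δ) ⊆ innerReg Ω (2 * μ) →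
      ∀ φ : EuclideanSpace ℝ (Fin 2) → ℝ, ContDiff ℝ (⊤ : ℕ∞) φ →
      ∀ u : EuclideanSpace ℝ (Fin 2) → ℝ,
        (∃ K, LipschitzOnWith K u Ω) →
        ContinuousOn u (closure Ω) →
        EqOn u φ (frontier Ω) →
        (∀ ψ : EuclideanSpace ℝ (Fin 2) → ℝ, ContDiff ℝ (⊤ : ℕ∞) ψ → HasCompactSupport ψ →
          tsupport ψ ⊆ Ω →
          ∫ x in Ω, aFun δ κp κm x * ∑ i, pd i u x * pd i ψ x = 0) →
        ∀ᵐ x ∂volume, x ∈ innerReg Ω μ → ‖fderiv ℝ u x‖ ≤ C * bdryNorm Ω φ := by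
  obtain ⟨C, hC, hbound⟩ := stmt0_general μ ![κp, κm] hμ.1 (Fin.forall_fin_two.2 ⟨hκp, hκm⟩)
    ((Fin.sum_univ_two _).trans_lt
      ((add_lt_add (contrast_lt_half hκp) (contrast_lt_half hκm)).trans_eq (add_halves 1)))
  refine ⟨C, hC, fun δ hδ hsub φ hφ u hu huc hbd hw => ae_of_all _ ?_⟩
  have hdisks := hsub.trans (innerReg_subset_innerReg (by linarith [hμ.1]))
  exact hbound Ω hΩo hΩb _ _ _ (isDiskConductivity_aFun hδ.1.le κp κm)
    (Fin.forall_fin_two.2 (union_subset_iff.1 hdisks)) φ hφ.continuous.continuousOn u hu huc hbd hw
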